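/- Let n ≥ 1, δ > 0, and let V : ℝⁿ → ℝ be a smooth potential of symbolic decay order −δ: for every multi-index α there is a constant C_α such that |∂^α V(x)| ≤ C_α (1+|x|)^{−δ−|α|} for all x ∈ ℝⁿ. Let λ > 0 and let ψ : ℝⁿ → ℂ be smooth with ∫_{ℝⁿ} |ψ|² < ∞ and −Δψ + Vψ = λψ on ℝⁿ, where Δ = Σᵢ ∂²/∂xᵢ². Then for every β ∈ ℝ one has ∫_{ℝⁿ} (1+|x|)^{2β} |ψ(x)|² dx < ∞. -/

import Mathlib

open MeasureTheory

/-- Euclidean Laplacian of a complex-valued function on `ℝⁿ`. -/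
noncomputable def lap {n : ℕ} (f : EuclideanSpace ℝ (Fin n) → ℂ)
    (x : EuclideanSpace ℝ (Fin n)) : ℂ :=
  ∑ i : Fin n, fderiv ℝ (fun y => fderiv ℝ f y (EuclideanSpace.single i 1)) x
    (EuclideanSpace.single i 1)

/-!
Write the equation as `Δψ = qψ` with `q = V - λ`, so that `q → -λ` and `(x · ∇)q → 0` at infinity.
The field `Y = 2⟨∇ψ, (x · ∇)ψ⟩ - (|∇ψ|² + q|ψ|²)x` has divergence
`2|∇ψ|² - d(|∇ψ|² + q|ψ|²) - ((x · ∇)q)|ψ|²` (Rellich–Pohozaev). Multiply `Y` by a nondecreasing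
radial weight `w` and add the multiple of `⟨∇ψ, ψ⟩` that turns the coefficient of the energy density
`|∇ψ|² + q|ψ|²` into `-w / 2`. The divergence then consists of the nonnegative terms `(3/2)w|∇ψ|²`
and `4(dw/dρ)|(x · ∇)ψ|²` with `ρ = 1 + |x|²`, the term `-w(q / 2 + (x · ∇)q)|ψ|²`, which is about
`(λ / 2)w|ψ|²` at infinity, and a cross term absorbed by the previous ones up to `O(w|ψ|² / ρ)`.
Hence it is at least `(λ / 4)w|ψ|² - K|ψ|²`.

For the weights `w = (ρ / (1 + tρ))ᵏ` the constant `K` is uniform in `t > 0`,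
while `w` is bounded for each `t`. As `ψ` and, by Caccioppoli's inequality, `∇ψ` are square
integrable, the field is then `O(1 + |x|)` times an integrable function, so its divergence
integrates to zero against dilated cutoffs in the limit. Thus `∫ w|ψ|²` is bounded uniformly in `t`,
and Fatou's lemma as `t → 0` gives the claim.
-/

open Filter Topology
open scoped InnerProductSpace Laplacian

section Fatou

variable {α ι : Type*} [MeasurableSpace α] {μ : Measure α} {l : Filter ι} [l.NeBot]
  [l.IsCountablyGenerated]

theorem integrable_and_integral_le_of_tendsto {f : ι → α → ℝ} {g : α → ℝ} {b : ι → ℝ} {B : ℝ}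
    (hf : ∀ k, Integrable (f k) μ) (hf_nonneg : ∀ k, 0 ≤ᵐ[μ] f k)
    (hfg : ∀ᵐ x ∂μ, Tendsto (fun k ↦ f k x) l (𝓝 (g x)))
    (hfb : ∀ k, ∫ x, f k x ∂μ ≤ b k) (hb : Tendsto b l (𝓝 B)) :
    Integrable g μ ∧ ∫ x, g x ∂μ ≤ B := by
  have hB : 0 ≤ B :=
    ge_of_tendsto' hb fun k ↦ (integral_nonneg_of_ae (hf_nonneg k)).trans (hfb k)
  have hfb' (k : ι) : ∫⁻ x, ‖f k x‖ₑ ∂μ ≤ ENNReal.ofReal (b k) := by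
    rw [← ofReal_integral_norm_eq_lintegral_enorm (hf k)]
    refine ENNReal.ofReal_le_ofReal ((integral_congr_ae ?_).trans_le (hfb k))
    filter_upwards [hf_nonneg k] with x hx using Real.norm_of_nonneg hx
  have hgB : ∫⁻ x, ‖g x‖ₑ ∂μ ≤ ENNReal.ofReal B := calc
    ∫⁻ x, ‖g x‖ₑ ∂μ = ∫⁻ x, l.liminf (fun k ↦ ‖f k x‖ₑ) ∂μ :=
      lintegral_congr_ae (by filter_upwards [hfg] with x hx using hx.enorm.liminf_eq.symm)
    _ ≤ l.liminf fun k ↦ ∫⁻ x, ‖f k x‖ₑ ∂μ :=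
      lintegral_liminf_le' fun k ↦ (hf k).aestronglyMeasurable.enorm
    _ ≤ l.liminf fun k ↦ ENNReal.ofReal (b k) := liminf_le_liminf (.of_forall hfb')
    _ = ENNReal.ofReal B := (ENNReal.tendsto_ofReal hb).liminf_eq
  have hg : Integrable g μ :=
    ⟨aestronglyMeasurable_of_tendsto_ae l (fun k ↦ (hf k).aestronglyMeasurable) hfg,
      hgB.trans_lt ENNReal.ofReal_lt_top⟩
  rw [← ofReal_integral_norm_eq_lintegral_enorm hg, ENNReal.ofReal_le_ofReal_iff hB] at hgB
  exact ⟨hg, (integral_mono hg hg.norm fun x ↦ Real.le_norm_self _).trans hgB⟩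

end Fatou

section Divergence

variable {E : Type*} [NormedAddCommGroup E] [NormedSpace ℝ E]

/-- The divergence of a vector field, as the trace of its derivative. -/
noncomputable def divergence (Y : E → E) (x : E) : ℝ :=
  LinearMap.trace ℝ E (fderiv ℝ Y x)

variable {Y Z : E → E} {f : E → ℝ} {x : E}

lemma divergence_add (hY : DifferentiableAt ℝ Y x) (hZ : DifferentiableAt ℝ Z x) :
    divergence (fun y ↦ Y y + Z y) x = divergence Y x + divergence Z x := by
  simp [divergence, fderiv_fun_add hY hZ]

lemma divergence_sub (hY : DifferentiableAt ℝ Y x) (hZ : DifferentiableAt ℝ Z x) :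
    divergence (fun y ↦ Y y - Z y) x = divergence Y x - divergence Z x := by
  simp [divergence, fderiv_fun_sub hY hZ]

lemma divergence_const_smul (c : ℝ) (hY : DifferentiableAt ℝ Y x) :
    divergence (fun y ↦ c • Y y) x = c * divergence Y x := by
  simp [divergence, fderiv_fun_const_smul hY]

variable [FiniteDimensional ℝ E]

lemma divergence_smul (hf : DifferentiableAt ℝ f x) (hY : DifferentiableAt ℝ Y x) :
    divergence (fun y ↦ f y • Y y) x = f x * divergence Y x + fderiv ℝ f x (Y x) := by
  simp [divergence, fderiv_fun_smul hf hY, LinearMap.trace_smulRight]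

lemma divergence_smul_id (hf : DifferentiableAt ℝ f x) :
    divergence (fun y ↦ f y • y) x = Module.finrank ℝ E * f x + fderiv ℝ f x x := by
  rw [divergence_smul hf differentiableAt_fun_id, divergence, fderiv_fun_id,
    ContinuousLinearMap.coe_id, LinearMap.trace_id, mul_comm]

/-- The trace of endomorphisms, as a continuous linear functional. -/
noncomputable def traceCLM (E : Type*) [NormedAddCommGroup E] [NormedSpace ℝ E]
    [FiniteDimensional ℝ E] : (E →L[ℝ] E) →L[ℝ] ℝ :=
  (LinearMap.trace ℝ E ∘ₗ ContinuousLinearMap.coeLM ℝ).toContinuousLinearMap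

lemma divergence_eq_traceCLM (Y : E → E) (x : E) : divergence Y x = traceCLM E (fderiv ℝ Y x) :=
  rfl

lemma continuous_divergence (hY : ContDiff ℝ 1 Y) : Continuous (divergence Y) :=
  (traceCLM E).continuous.comp (hY.continuous_fderiv one_ne_zero)

variable [MeasurableSpace E] [BorelSpace E] {μ : Measure E} [μ.IsAddHaarMeasure]

lemma integral_fderiv_eq_zero_of_hasCompactSupport {G : Type*} [NormedAddCommGroup G]
    [NormedSpace ℝ G] {g : E → G} (hg : ContDiff ℝ 1 g)
    (hsupp : HasCompactSupport g) : ∫ x, fderiv ℝ g x ∂μ = 0 := by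
  have hg' : Integrable (fderiv ℝ g) μ :=
    (hg.continuous_fderiv one_ne_zero).integrable_of_hasCompactSupport (hsupp.fderiv ℝ)
  ext v
  rw [ContinuousLinearMap.integral_apply hg']
  have hparts := integral_smul_fderiv_eq_neg_fderiv_smul_of_integrable (𝕜 := ℝ) (μ := μ)
    (f := fun _ : E ↦ (1 : ℝ)) (g := g) (v := v) (by simp)
    (by simpa using hg'.apply_continuousLinearMap v)
    (by simpa using hg.continuous.integrable_of_hasCompactSupport hsupp)
    (fun _ _ ↦ differentiableAt_const _)
    (fun x _ ↦ hg.differentiable one_ne_zero x)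
  simpa using hparts

lemma integrable_divergence_of_hasCompactSupport (hY : ContDiff ℝ 1 Y)
    (hsupp : HasCompactSupport Y) : Integrable (divergence Y) μ :=
  (traceCLM E).integrable_comp
    ((hY.continuous_fderiv one_ne_zero).integrable_of_hasCompactSupport (hsupp.fderiv ℝ))

lemma integral_divergence_eq_zero_of_hasCompactSupport (hY : ContDiff ℝ 1 Y)
    (hsupp : HasCompactSupport Y) : ∫ x, divergence Y x ∂μ = 0 := by
  have hY' : Integrable (fderiv ℝ Y) μ :=
    (hY.continuous_fderiv one_ne_zero).integrable_of_hasCompactSupport (hsupp.fderiv ℝ)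
  simp_rw [divergence_eq_traceCLM]
  rw [(traceCLM E).integral_comp_comm hY', integral_fderiv_eq_zero_of_hasCompactSupport hY hsupp,
    map_zero]

lemma integral_mul_divergence_of_hasCompactSupport (hf : ContDiff ℝ 1 f)
    (hsupp : HasCompactSupport f) (hY : ContDiff ℝ 1 Y) :
    ∫ x, f x * divergence Y x ∂μ = -∫ x, fderiv ℝ f x (Y x) ∂μ := by
  have hleft : Integrable (fun x ↦ f x * divergence Y x) μ :=
    (hf.continuous.mul (continuous_divergence hY)).integrable_of_hasCompactSupport hsupp.mul_right
  have hright : Integrable (fun x ↦ fderiv ℝ f x (Y x)) μ :=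
    ((hf.continuous_fderiv one_ne_zero).clm_apply hY.continuous).integrable_of_hasCompactSupport
      ((hsupp.fderiv ℝ).mono fun x hx h ↦ hx (by simp [h]))
  have hzero := integral_divergence_eq_zero_of_hasCompactSupport (μ := μ) (hf.smul hY)
    (hsupp.smul_right (f' := Y))
  have hprod (x : E) := divergence_smul (hf.differentiable one_ne_zero x)
    (hY.differentiable one_ne_zero x)
  simp only [Pi.smul_def', hprod] at hzero
  rw [integral_add hleft hright] at hzero
  exact eq_neg_of_add_eq_zero_left hzero

end Divergence

section Cutoff

variable {E : Type*} [NormedAddCommGroup E] [NormedSpace ℝ E]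

lemma exists_forall_mul_norm_fderiv_comp_smul_le {φ : E → ℝ} (hφ : ContDiff ℝ 1 φ)
    (hsupp : HasCompactSupport φ) :
    ∃ C, ∀ R > 0, ∀ x, (R + ‖x‖) * ‖fderiv ℝ (fun y ↦ φ (R⁻¹ • y)) x‖ ≤ C := by
  have hφ' : Continuous fun y ↦ (1 + ‖y‖) • fderiv ℝ φ y :=
    (by fun_prop : Continuous fun y : E ↦ 1 + ‖y‖).smul (hφ.continuous_fderiv one_ne_zero)
  obtain ⟨C, hC⟩ := hφ'.bounded_above_of_compact_support
    (HasCompactSupport.smul_left (f := fun y : E ↦ 1 + ‖y‖) (hsupp.fderiv ℝ))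
  refine ⟨C, fun R hR x ↦ ?_⟩
  calc (R + ‖x‖) * ‖fderiv ℝ (fun y ↦ φ (R⁻¹ • y)) x‖
      = (1 + ‖R⁻¹ • x‖) * ‖fderiv ℝ φ (R⁻¹ • x)‖ := by
        rw [fderiv_comp_smul, norm_smul, norm_smul, norm_inv, Real.norm_of_nonneg hR.le]
        field_simp
    _ = ‖(1 + ‖R⁻¹ • x‖) • fderiv ℝ φ (R⁻¹ • x)‖ := by
        rw [norm_smul (1 + ‖R⁻¹ • x‖), Real.norm_of_nonneg (by positivity)]
    _ ≤ C := hC _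

variable [FiniteDimensional ℝ E]

/-- The dilates of a fixed smooth bump function: `cutoff N` equals `1` on the ball of radius
`N + 1` and is supported in the ball of radius `2 * (N + 1)`. -/
noncomputable def cutoff (N : ℕ) (x : E) : ℝ :=
  (default : ContDiffBump (0 : E)) ((N + 1 : ℝ)⁻¹ • x)

lemma cutoff_nonneg (N : ℕ) (x : E) : 0 ≤ cutoff N x :=
  ContDiffBump.nonneg _

lemma cutoff_le_one (N : ℕ) (x : E) : cutoff N x ≤ 1 :=
  ContDiffBump.le_one _

lemma contDiff_cutoff (N : ℕ) : ContDiff ℝ 1 (cutoff (E := E) N) :=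
  (ContDiffBump.contDiff _).comp (contDiff_const_smul _)

lemma hasCompactSupport_cutoff (N : ℕ) : HasCompactSupport (cutoff (E := E) N) :=
  (ContDiffBump.hasCompactSupport _).comp_homeomorph
    (Homeomorph.smulOfNeZero (N + 1 : ℝ)⁻¹ (by positivity))

lemma tendsto_cutoff (x : E) : Tendsto (fun N ↦ cutoff N x) atTop (𝓝 1) := by
  have hscale : Tendsto (fun N : ℕ ↦ ((N : ℝ) + 1)⁻¹ • x) atTop (𝓝 0) := by
    simpa [one_div] using (tendsto_one_div_add_atTop_nhds_zero_nat (𝕜 := ℝ)).smul_const x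
  refine ((ContDiffBump.continuous (default : ContDiffBump (0 : E))).tendsto' 0 1 ?_).comp hscale
  exact ContDiffBump.eventuallyEq_one _ |>.eq_of_nhds

lemma exists_forall_mul_norm_fderiv_cutoff_le (E : Type*) [NormedAddCommGroup E] [NormedSpace ℝ E]
    [FiniteDimensional ℝ E] :
    ∃ C, ∀ N (x : E), (N + 1 + ‖x‖) * ‖fderiv ℝ (cutoff N) x‖ ≤ C := by
  obtain ⟨C, hC⟩ := exists_forall_mul_norm_fderiv_comp_smul_le
    (ContDiffBump.contDiff (default : ContDiffBump (0 : E)))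
    (ContDiffBump.hasCompactSupport (default : ContDiffBump (0 : E)))
  exact ⟨C, fun N x ↦ hC (N + 1) (by positivity) x⟩

variable [MeasurableSpace E] [BorelSpace E] {μ : Measure E}

lemma integrable_cutoff_mul (N : ℕ) {f : E → ℝ} (hf : LocallyIntegrable f μ) :
    Integrable (fun x ↦ cutoff N x * f x) μ :=
  hf.integrable_smul_left_of_hasCompactSupport (contDiff_cutoff N).continuous
    (hasCompactSupport_cutoff N)

lemma tendsto_integral_cutoff_mul {f : E → ℝ} (hf : Integrable f μ) :
    Tendsto (fun N ↦ ∫ x, cutoff N x * f x ∂μ) atTop (𝓝 (∫ x, f x ∂μ)) := by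
  refine tendsto_integral_of_dominated_convergence (fun x ↦ ‖f x‖)
    (fun N ↦ (contDiff_cutoff N).continuous.aestronglyMeasurable.mul hf.aestronglyMeasurable)
    hf.norm (fun N ↦ .of_forall fun x ↦ ?_) (.of_forall fun x ↦ ?_)
  · rw [norm_mul, Real.norm_of_nonneg (cutoff_nonneg N x)]
    exact mul_le_of_le_one_left (norm_nonneg _) (cutoff_le_one N x)
  · simpa using (tendsto_cutoff x).mul_const (f x)

lemma tendsto_integral_fderiv_cutoff_apply {Y : E → E} (hY : Continuous Y) {G : E → ℝ}
    (hG : Integrable G μ) (hYG : ∀ x, ‖Y x‖ ≤ (1 + ‖x‖) * G x) :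
    Tendsto (fun N ↦ ∫ x, fderiv ℝ (cutoff N) x (Y x) ∂μ) atTop (𝓝 0) := by
  obtain ⟨C, hC⟩ := exists_forall_mul_norm_fderiv_cutoff_le E
  have hG_nonneg (x : E) : 0 ≤ G x :=
    nonneg_of_mul_nonneg_right ((norm_nonneg _).trans (hYG x)) (by positivity)
  have hbound (N : ℕ) (x : E) : ‖fderiv ℝ (cutoff N) x (Y x)‖ ≤ C * G x := calc
    ‖fderiv ℝ (cutoff N) x (Y x)‖ ≤ ‖fderiv ℝ (cutoff N) x‖ * ((1 + ‖x‖) * G x) :=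
      (ContinuousLinearMap.le_opNorm _ _).trans (by gcongr; exact hYG x)
    _ ≤ (N + 1 + ‖x‖) * ‖fderiv ℝ (cutoff N) x‖ * G x := by
      rw [← mul_assoc, mul_comm ‖fderiv ℝ (cutoff N) x‖]
      gcongr
      · exact hG_nonneg x
      · linarith [N.cast_nonneg (α := ℝ)]
    _ ≤ C * G x := by gcongr; exacts [hG_nonneg x, hC N x]
  have hlim (x : E) : Tendsto (fun N ↦ fderiv ℝ (cutoff N) x (Y x)) atTop (𝓝 0) := by
    refine squeeze_zero_norm (a := fun N : ℕ ↦ C * ‖Y x‖ * (1 / ((N : ℝ) + 1))) (fun N ↦ ?_) ?_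
    · have hCN : ‖fderiv ℝ (cutoff N) x‖ ≤ C / (N + 1) := by
        rw [le_div_iff₀' (by positivity)]
        exact (mul_le_mul_of_nonneg_right (by linarith [norm_nonneg x]) (norm_nonneg _)).trans
          (hC N x)
      calc ‖fderiv ℝ (cutoff N) x (Y x)‖ ≤ C / (N + 1) * ‖Y x‖ :=
            ContinuousLinearMap.le_of_opNorm_le _ hCN _
        _ = C * ‖Y x‖ * (1 / (N + 1)) := by ring
    · simpa using tendsto_one_div_add_atTop_nhds_zero_nat.const_mul (C * ‖Y x‖)
  have hcont (N : ℕ) : Continuous fun x ↦ fderiv ℝ (cutoff N) x (Y x) :=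
    ((contDiff_cutoff N).continuous_fderiv one_ne_zero).clm_apply hY
  simpa using tendsto_integral_of_dominated_convergence (fun x ↦ C * G x)
    (fun N ↦ (hcont N).aestronglyMeasurable) (hG.const_mul C) (fun N ↦ .of_forall (hbound N))
    (.of_forall hlim)

variable [μ.IsAddHaarMeasure]

theorem integrable_and_integral_le_of_sub_le_divergence {Y : E → E} (hY : ContDiff ℝ 1 Y)
    {G P Q : E → ℝ} (hG : Integrable G μ) (hYG : ∀ x, ‖Y x‖ ≤ (1 + ‖x‖) * G x)
    (hP : LocallyIntegrable P μ) (hP_nonneg : ∀ x, 0 ≤ P x) (hQ : Integrable Q μ)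
    (hPQ : ∀ x, P x - Q x ≤ divergence Y x) :
    Integrable P μ ∧ ∫ x, P x ∂μ ≤ ∫ x, Q x ∂μ := by
  have hcut (N : ℕ) : ∫ x, cutoff N x * P x ∂μ ≤
      ∫ x, cutoff N x * Q x ∂μ - ∫ x, fderiv ℝ (cutoff N) x (Y x) ∂μ := by
    have hiQ := integrable_cutoff_mul N hQ.locallyIntegrable
    have hidiv := integrable_cutoff_mul (μ := μ) N (continuous_divergence hY).locallyIntegrable
    rw [sub_eq_add_neg, ← integral_mul_divergence_of_hasCompactSupport (contDiff_cutoff N)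
      (hasCompactSupport_cutoff N) hY, ← integral_add hiQ hidiv]
    refine integral_mono (integrable_cutoff_mul N hP) (hiQ.add hidiv) fun x ↦ ?_
    simp only [← mul_add]
    gcongr
    · exact cutoff_nonneg N x
    · linarith [hPQ x]
  refine integrable_and_integral_le_of_tendsto (l := atTop) (fun N ↦ integrable_cutoff_mul N hP)
    (fun N ↦ .of_forall fun x ↦ mul_nonneg (cutoff_nonneg N x) (hP_nonneg x))
    (.of_forall fun x ↦ ?_) hcut ?_
  · simpa using (tendsto_cutoff x).mul_const (P x)
  · simpa using (tendsto_integral_cutoff_mul hQ).sub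
      (tendsto_integral_fderiv_cutoff_apply hY.continuous hG hYG)

end Cutoff

section RadialDeriv

variable {E F : Type*} [NormedAddCommGroup E] [NormedSpace ℝ E] [NormedAddCommGroup F]
  [NormedSpace ℝ F]

/-- The derivative `(x · ∇)ψ` along the dilation field. -/
noncomputable def radialDeriv (ψ : E → F) (x : E) : F :=
  fderiv ℝ ψ x x

variable {ψ : E → F}

lemma contDiff_radialDeriv (hψ : ContDiff ℝ 2 ψ) : ContDiff ℝ 1 (radialDeriv ψ) :=
  (hψ.fderiv_right one_add_one_eq_two.le).clm_apply contDiff_id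

lemma hasFDerivAt_fderiv_apply (hψ : ContDiff ℝ 2 ψ) (x v : E) :
    HasFDerivAt (fun y ↦ fderiv ℝ ψ y v) ((fderiv ℝ (fderiv ℝ ψ) x).flip v) x := by
  have h : HasFDerivAt (fderiv ℝ ψ) (fderiv ℝ (fderiv ℝ ψ) x) x :=
    ((hψ.fderiv_right one_add_one_eq_two.le).differentiable one_ne_zero x).hasFDerivAt
  simpa using h.clm_apply (hasFDerivAt_const v x)

lemma fderiv_radialDeriv_apply (hψ : ContDiff ℝ 2 ψ) (x v : E) :
    fderiv ℝ (radialDeriv ψ) x v = fderiv ℝ ψ x v + fderiv ℝ (fderiv ℝ ψ) x x v := by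
  have h : HasFDerivAt (fderiv ℝ ψ) (fderiv ℝ (fderiv ℝ ψ) x) x :=
    ((hψ.fderiv_right one_add_one_eq_two.le).differentiable one_ne_zero x).hasFDerivAt
  have hsymm : IsSymmSndFDerivAt ℝ ψ x := hψ.contDiffAt.isSymmSndFDerivAt (by simp)
  have hrad : HasFDerivAt (radialDeriv ψ) _ x := h.clm_apply (hasFDerivAt_id x)
  simp [hrad.fderiv, hsymm.eq x v]

end RadialDeriv

section Gradient

variable {E F : Type*} [NormedAddCommGroup E] [InnerProductSpace ℝ E] [FiniteDimensional ℝ E]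
  [NormedAddCommGroup F] [InnerProductSpace ℝ F]

lemma divergence_eq_sum_inner (Y : E → E) (x : E) :
    divergence Y x =
      ∑ i, ⟪stdOrthonormalBasis ℝ E i, fderiv ℝ Y x (stdOrthonormalBasis ℝ E i)⟫_ℝ :=
  LinearMap.trace_eq_sum_inner _ (stdOrthonormalBasis ℝ E)

/-- The squared Hilbert–Schmidt norm `|∇ψ|²` of the derivative of `ψ`. -/
noncomputable def gradSq (ψ : E → F) (x : E) : ℝ :=
  ∑ i, ‖fderiv ℝ ψ x (stdOrthonormalBasis ℝ E i)‖ ^ 2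

/-- The vector field `⟨∇ψ, Φ⟩`, i.e. the Riesz representative of `v ↦ ⟪Dψ(x) v, Φ(x)⟫`. It is
written in an orthonormal basis since `F` is not assumed to be complete. -/
noncomputable def flux (ψ Φ : E → F) (x : E) : E :=
  ∑ i, ⟪fderiv ℝ ψ x (stdOrthonormalBasis ℝ E i), Φ x⟫_ℝ • stdOrthonormalBasis ℝ E i

variable {ψ Φ : E → F}

lemma gradSq_nonneg (ψ : E → F) (x : E) : 0 ≤ gradSq ψ x :=
  Finset.sum_nonneg fun _ _ ↦ sq_nonneg _

lemma norm_fderiv_apply_sq_le_gradSq (ψ : E → F) (x v : E) :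
    ‖fderiv ℝ ψ x v‖ ^ 2 ≤ gradSq ψ x * ‖v‖ ^ 2 := by
  set b := stdOrthonormalBasis ℝ E
  have hexpand : fderiv ℝ ψ x v = ∑ i, ⟪b i, v⟫_ℝ • fderiv ℝ ψ x (b i) := by
    conv_lhs => rw [← b.sum_repr' v, map_sum]
    simp only [map_smul]
  calc ‖fderiv ℝ ψ x v‖ ^ 2
      ≤ (∑ i, ‖fderiv ℝ ψ x (b i)‖ * ‖⟪b i, v⟫_ℝ‖) ^ 2 := by
        rw [hexpand]
        gcongr
        exact norm_sum_le_of_le _ fun i _ ↦ by rw [norm_smul, mul_comm]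
    _ ≤ gradSq ψ x * ∑ i, ‖⟪b i, v⟫_ℝ‖ ^ 2 := Finset.sum_mul_sq_le_sq_mul_sq _ _ _
    _ = gradSq ψ x * ‖v‖ ^ 2 := by rw [b.sum_sq_norm_inner_right]

lemma norm_radialDeriv_sq_le (ψ : E → F) (x : E) :
    ‖radialDeriv ψ x‖ ^ 2 ≤ gradSq ψ x * ‖x‖ ^ 2 :=
  norm_fderiv_apply_sq_le_gradSq ψ x x

lemma inner_flux (ψ Φ : E → F) (x v : E) :
    ⟪v, flux ψ Φ x⟫_ℝ = ⟪fderiv ℝ ψ x v, Φ x⟫_ℝ := by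
  conv_rhs => rw [← (stdOrthonormalBasis ℝ E).sum_repr' v, map_sum, sum_inner]
  simp only [flux, inner_sum, map_smul, real_inner_smul_right,
    real_inner_comm, mul_comm]

lemma norm_flux_sq_le (ψ Φ : E → F) (x : E) :
    ‖flux ψ Φ x‖ ^ 2 ≤ gradSq ψ x * ‖Φ x‖ ^ 2 := by
  rw [← (stdOrthonormalBasis ℝ E).sum_sq_norm_inner_right, gradSq, Finset.sum_mul]
  gcongr with i
  rw [inner_flux, ← mul_pow]
  gcongr
  exact norm_inner_le_norm _ _

lemma contDiff_gradSq (hψ : ContDiff ℝ 2 ψ) : ContDiff ℝ 1 (gradSq ψ) :=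
  ContDiff.sum fun _ _ ↦
    ((hψ.fderiv_right one_add_one_eq_two.le).clm_apply contDiff_const).norm_sq ℝ

lemma contDiff_flux (hψ : ContDiff ℝ 2 ψ) (hΦ : ContDiff ℝ 1 Φ) : ContDiff ℝ 1 (flux ψ Φ) :=
  ContDiff.sum fun _ _ ↦ (((hψ.fderiv_right one_add_one_eq_two.le).clm_apply
    contDiff_const).inner ℝ hΦ).smul contDiff_const

lemma fderiv_gradSq_apply (hψ : ContDiff ℝ 2 ψ) (x v : E) :
    fderiv ℝ (gradSq ψ) x v = 2 * ∑ i, ⟪fderiv ℝ ψ x (stdOrthonormalBasis ℝ E i),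
      fderiv ℝ (fderiv ℝ ψ) x v (stdOrthonormalBasis ℝ E i)⟫_ℝ := by
  have h : HasFDerivAt (gradSq ψ) _ x := HasFDerivAt.fun_sum fun i _ ↦
    (hasFDerivAt_fderiv_apply hψ x (stdOrthonormalBasis ℝ E i)).norm_sq
  rw [h.fderiv]
  simp [Finset.mul_sum]

lemma divergence_flux (hψ : ContDiff ℝ 2 ψ) (hΦ : ContDiff ℝ 1 Φ) (x : E) :
    divergence (flux ψ Φ) x = ⟪Δ ψ x, Φ x⟫_ℝ +
      ∑ i, ⟪fderiv ℝ ψ x (stdOrthonormalBasis ℝ E i),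
        fderiv ℝ Φ x (stdOrthonormalBasis ℝ E i)⟫_ℝ := by
  set b := stdOrthonormalBasis ℝ E
  have hcoord (i) : ⟪b i, fderiv ℝ (flux ψ Φ) x (b i)⟫_ℝ =
      ⟪fderiv ℝ (fderiv ℝ ψ) x (b i) (b i), Φ x⟫_ℝ +
        ⟪fderiv ℝ ψ x (b i), fderiv ℝ Φ x (b i)⟫_ℝ := by
    have hflux := (contDiff_flux hψ hΦ).differentiable one_ne_zero x
    have hψi := hasFDerivAt_fderiv_apply hψ x (b i)
    have h := fderiv_inner_apply ℝ (differentiableAt_const (b i)) hflux (b i)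
    simp only [inner_flux, fderiv_fun_const, Pi.zero_apply, zero_apply, inner_zero_left,
      add_zero] at h
    rw [← h, fderiv_inner_apply ℝ hψi.differentiableAt (hΦ.differentiable one_ne_zero x),
      hψi.fderiv, ContinuousLinearMap.flip_apply, add_comm]
  simp only [divergence_eq_sum_inner, hcoord, Finset.sum_add_distrib, ← sum_inner, b,
    InnerProductSpace.laplacian_eq_iteratedFDeriv_stdOrthonormalBasis, iteratedFDeriv_two_apply,
    Matrix.cons_val_zero, Matrix.cons_val_one]

lemma divergence_flux_self (hψ : ContDiff ℝ 2 ψ) (x : E) :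
    divergence (flux ψ ψ) x = ⟪Δ ψ x, ψ x⟫_ℝ + gradSq ψ x := by
  simp only [divergence_flux hψ (hψ.of_le one_le_two), real_inner_self_eq_norm_sq, gradSq]

lemma divergence_flux_radialDeriv (hψ : ContDiff ℝ 2 ψ) (x : E) :
    divergence (flux ψ (radialDeriv ψ)) x =
      ⟪Δ ψ x, radialDeriv ψ x⟫_ℝ + gradSq ψ x + fderiv ℝ (gradSq ψ) x x / 2 := by
  rw [divergence_flux hψ (contDiff_radialDeriv hψ), fderiv_gradSq_apply hψ]
  simp only [fderiv_radialDeriv_apply hψ, inner_add_right, Finset.sum_add_distrib,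
    real_inner_self_eq_norm_sq, gradSq]
  ring

end Gradient

lemma abs_le_add_of_sq_le_four_mul {a b c : ℝ} (hb : 0 ≤ b) (hc : 0 ≤ c) (h : a ^ 2 ≤ 4 * b * c) :
    |a| ≤ b + c :=
  abs_le_of_sq_le_sq (by linarith [sq_nonneg (b - c)]) (add_nonneg hb hc)

section GradientIntegrability

variable {E F : Type*} [NormedAddCommGroup E] [InnerProductSpace ℝ E] [FiniteDimensional ℝ E]
  [NormedAddCommGroup F] [InnerProductSpace ℝ F] {ψ : E → F} {K : ℝ}

lemma sq_mul_gradSq_le_divergence_add {χ : E → ℝ} {x : E} (hψ : ContDiff ℝ 2 ψ)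
    (hK : -K * ‖ψ x‖ ^ 2 ≤ ⟪Δ ψ x, ψ x⟫_ℝ) (hχ : DifferentiableAt ℝ χ x) :
    χ x ^ 2 * gradSq ψ x ≤ 2 * divergence (fun y ↦ χ y ^ 2 • flux ψ ψ y) x +
      (2 * K * χ x ^ 2 + 4 * ‖fderiv ℝ χ x‖ ^ 2) * ‖ψ x‖ ^ 2 := by
  have hdiv : divergence (fun y ↦ χ y ^ 2 • flux ψ ψ y) x =
      χ x ^ 2 * (⟪Δ ψ x, ψ x⟫_ℝ + gradSq ψ x) + 2 * χ x * fderiv ℝ χ x (flux ψ ψ x) := by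
    rw [divergence_smul (hχ.fun_pow 2)
      ((contDiff_flux hψ (hψ.of_le one_le_two)).differentiable one_ne_zero x),
      divergence_flux_self hψ, fderiv_fun_pow 2 hχ]
    simp
  have hflux : (fderiv ℝ χ x (flux ψ ψ x)) ^ 2 ≤
      gradSq ψ x * (‖fderiv ℝ χ x‖ ^ 2 * ‖ψ x‖ ^ 2) := calc
    (fderiv ℝ χ x (flux ψ ψ x)) ^ 2 = ‖fderiv ℝ χ x (flux ψ ψ x)‖ ^ 2 := (sq_abs _).symm
    _ ≤ (‖fderiv ℝ χ x‖ * ‖flux ψ ψ x‖) ^ 2 := by gcongr; exact ContinuousLinearMap.le_opNorm _ _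
    _ ≤ ‖fderiv ℝ χ x‖ ^ 2 * (gradSq ψ x * ‖ψ x‖ ^ 2) := by
      rw [mul_pow]; gcongr; exact norm_flux_sq_le ψ ψ x
    _ = _ := by ring
  have hyoung : |4 * χ x * fderiv ℝ χ x (flux ψ ψ x)| ≤
      χ x ^ 2 * gradSq ψ x + 4 * (‖fderiv ℝ χ x‖ ^ 2 * ‖ψ x‖ ^ 2) := by
    have hgrad := gradSq_nonneg ψ x
    refine abs_le_add_of_sq_le_four_mul (by positivity) (by positivity) ?_
    linarith [mul_le_mul_of_nonneg_left hflux (sq_nonneg (4 * χ x))]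
  rw [hdiv]
  linarith [neg_le_of_abs_le hyoung, mul_le_mul_of_nonneg_left hK (sq_nonneg (χ x))]

variable [MeasurableSpace E] [BorelSpace E] {μ : Measure E} [μ.IsAddHaarMeasure]

-- This is Caccioppoli's inequality.
lemma integral_sq_mul_gradSq_le (hψ : ContDiff ℝ 2 ψ)
    (hK : ∀ x, -K * ‖ψ x‖ ^ 2 ≤ ⟪Δ ψ x, ψ x⟫_ℝ) {χ : E → ℝ} (hχ : ContDiff ℝ 1 χ)
    (hsupp : HasCompactSupport χ) :
    ∫ x, χ x ^ 2 * gradSq ψ x ∂μ ≤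
      ∫ x, (2 * K * χ x ^ 2 + 4 * ‖fderiv ℝ χ x‖ ^ 2) * ‖ψ x‖ ^ 2 ∂μ := by
  have hsupp_sq : HasCompactSupport fun y ↦ χ y ^ 2 :=
    hsupp.comp_left (g := fun t : ℝ ↦ t ^ 2) (by simp)
  have hfield : ContDiff ℝ 1 fun y ↦ χ y ^ 2 • flux ψ ψ y :=
    (hχ.pow 2).smul (contDiff_flux hψ (hψ.of_le one_le_two))
  have hdiv : Integrable (divergence fun y ↦ χ y ^ 2 • flux ψ ψ y) μ :=
    integrable_divergence_of_hasCompactSupport hfield hsupp_sq.smul_right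
  have hleft : Integrable (fun x ↦ χ x ^ 2 * gradSq ψ x) μ :=
    ((hχ.continuous.pow 2).mul (contDiff_gradSq hψ).continuous).integrable_of_hasCompactSupport
      hsupp_sq.mul_right
  have hright :
      Integrable (fun x ↦ (2 * K * χ x ^ 2 + 4 * ‖fderiv ℝ χ x‖ ^ 2) * ‖ψ x‖ ^ 2) μ := by
    have hcont : Continuous fun x ↦ 2 * K * χ x ^ 2 + 4 * ‖fderiv ℝ χ x‖ ^ 2 :=
      .add (.const_mul (hχ.continuous.pow 2) _)
        (.const_mul ((hχ.continuous_fderiv one_ne_zero).norm.pow 2) _)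
    have hcompact : HasCompactSupport fun x ↦ 2 * K * χ x ^ 2 + 4 * ‖fderiv ℝ χ x‖ ^ 2 :=
      hsupp_sq.mul_left.add ((hsupp.fderiv ℝ).comp_left (g := fun L ↦ 4 * ‖L‖ ^ 2) (by simp))
    exact (hcont.mul (hψ.continuous.norm.pow 2)).integrable_of_hasCompactSupport hcompact.mul_right
  calc ∫ x, χ x ^ 2 * gradSq ψ x ∂μ
      ≤ ∫ x, 2 * divergence (fun y ↦ χ y ^ 2 • flux ψ ψ y) x +
          (2 * K * χ x ^ 2 + 4 * ‖fderiv ℝ χ x‖ ^ 2) * ‖ψ x‖ ^ 2 ∂μ :=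
        integral_mono hleft ((hdiv.const_mul 2).add hright)
          fun x ↦ sq_mul_gradSq_le_divergence_add hψ (hK x) (hχ.differentiable one_ne_zero x)
    _ = ∫ x, (2 * K * χ x ^ 2 + 4 * ‖fderiv ℝ χ x‖ ^ 2) * ‖ψ x‖ ^ 2 ∂μ := by
        rw [integral_add (hdiv.const_mul 2) hright, integral_const_mul,
          integral_divergence_eq_zero_of_hasCompactSupport hfield hsupp_sq.smul_right, mul_zero,
          zero_add]

theorem integrable_gradSq (hψ : ContDiff ℝ 2 ψ) (hK : ∀ x, -K * ‖ψ x‖ ^ 2 ≤ ⟪Δ ψ x, ψ x⟫_ℝ)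
    (hL2 : Integrable (fun x ↦ ‖ψ x‖ ^ 2) μ) : Integrable (gradSq ψ) μ := by
  obtain ⟨C, hC⟩ := exists_forall_mul_norm_fderiv_cutoff_le E
  have hcoeff (N : ℕ) (x : E) :
      2 * |K| * cutoff N x ^ 2 + 4 * ‖fderiv ℝ (cutoff N) x‖ ^ 2 ≤ 2 * |K| + 4 * C ^ 2 := by
    have hC' : ‖fderiv ℝ (cutoff N) x‖ ≤ C :=
      (le_mul_of_one_le_left (norm_nonneg _)
        (by linarith [norm_nonneg x, N.cast_nonneg (α := ℝ)])).trans (hC N x)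
    have hK_cutoff : |K| * cutoff N x ^ 2 ≤ |K| * 1 := by
      gcongr
      exact pow_le_one₀ (cutoff_nonneg N x) (cutoff_le_one N x)
    linarith [pow_le_pow_left₀ (norm_nonneg _) hC' 2]
  have hK_abs (x : E) : -|K| * ‖ψ x‖ ^ 2 ≤ ⟪Δ ψ x, ψ x⟫_ℝ :=
    (mul_le_mul_of_nonneg_right (neg_le_neg (le_abs_self K)) (sq_nonneg _)).trans (hK x)
  refine (integrable_and_integral_le_of_tendsto (l := atTop)
    (f := fun N x ↦ cutoff N x ^ 2 * gradSq ψ x)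
    (b := fun _ ↦ ∫ x, (2 * |K| + 4 * C ^ 2) * ‖ψ x‖ ^ 2 ∂μ) (fun N ↦ ?_)
    (fun N ↦ .of_forall fun x ↦ mul_nonneg (sq_nonneg _) (gradSq_nonneg ψ x))
    (.of_forall fun x ↦ ?_) (fun N ↦ ?_) tendsto_const_nhds).1
  · simpa only [pow_two, mul_assoc, Pi.mul_apply] using integrable_cutoff_mul (μ := μ) N
      ((contDiff_cutoff N).continuous.mul (contDiff_gradSq hψ).continuous).locallyIntegrable
  · simpa using ((tendsto_cutoff x).pow 2).mul_const (gradSq ψ x)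
  · refine (integral_sq_mul_gradSq_le hψ hK_abs (contDiff_cutoff N)
      (hasCompactSupport_cutoff N)).trans (integral_mono_of_nonneg (.of_forall fun x ↦ ?_)
        (hL2.const_mul _) (.of_forall fun x ↦ ?_))
    · positivity
    · exact mul_le_mul_of_nonneg_right (hcoeff N x) (sq_nonneg _)

end GradientIntegrability

section Virial

variable {E F : Type*} [NormedAddCommGroup E] [InnerProductSpace ℝ E] [FiniteDimensional ℝ E]
  [NormedAddCommGroup F] [InnerProductSpace ℝ F] {q : E → ℝ} {ψ : E → F} {x : E}

/-- The Rellich–Pohozaev field of the equation `Δψ = qψ`, obtained by pairing it with the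
dilation derivative of `ψ`. -/
noncomputable def virialField (q : E → ℝ) (ψ : E → F) (x : E) : E :=
  (2 : ℝ) • flux ψ (radialDeriv ψ) x - (gradSq ψ x + q x * ‖ψ x‖ ^ 2) • x

lemma contDiff_virialField (hq : ContDiff ℝ 1 q) (hψ : ContDiff ℝ 2 ψ) :
    ContDiff ℝ 1 (virialField q ψ) :=
  ((contDiff_flux hψ (contDiff_radialDeriv hψ)).const_smul (2 : ℝ)).sub
    (((contDiff_gradSq hψ).add (hq.mul ((hψ.of_le one_le_two).norm_sq ℝ))).smul contDiff_id)

lemma inner_virialField (q : E → ℝ) (ψ : E → F) (x : E) :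
    ⟪x, virialField q ψ x⟫_ℝ =
      2 * ‖radialDeriv ψ x‖ ^ 2 - (gradSq ψ x + q x * ‖ψ x‖ ^ 2) * ‖x‖ ^ 2 := by
  rw [virialField, inner_sub_right, real_inner_smul_right, real_inner_smul_right, inner_flux,
    ← radialDeriv, real_inner_self_eq_norm_sq, real_inner_self_eq_norm_sq]

lemma norm_virialField_le (q : E → ℝ) (ψ : E → F) (x : E) :
    ‖virialField q ψ x‖ ≤ ‖x‖ * (3 * gradSq ψ x + |q x| * ‖ψ x‖ ^ 2) := by
  have hflux : ‖flux ψ (radialDeriv ψ) x‖ ≤ gradSq ψ x * ‖x‖ := by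
    refine abs_le_of_sq_le_sq' ?_ (by have := gradSq_nonneg ψ x; positivity) |>.2
    calc ‖flux ψ (radialDeriv ψ) x‖ ^ 2 ≤ gradSq ψ x * ‖radialDeriv ψ x‖ ^ 2 :=
          norm_flux_sq_le _ _ _
      _ ≤ gradSq ψ x * (gradSq ψ x * ‖x‖ ^ 2) :=
          mul_le_mul_of_nonneg_left (norm_radialDeriv_sq_le ψ x) (gradSq_nonneg ψ x)
      _ = (gradSq ψ x * ‖x‖) ^ 2 := by ring
  have hpot : |gradSq ψ x + q x * ‖ψ x‖ ^ 2| ≤ gradSq ψ x + |q x| * ‖ψ x‖ ^ 2 := by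
    refine (abs_add_le _ _).trans_eq ?_
    rw [abs_of_nonneg (gradSq_nonneg ψ x), abs_mul, abs_of_nonneg (sq_nonneg ‖ψ x‖)]
  calc ‖virialField q ψ x‖
      ≤ 2 * ‖flux ψ (radialDeriv ψ) x‖ + |gradSq ψ x + q x * ‖ψ x‖ ^ 2| * ‖x‖ := by
        refine (norm_sub_le _ _).trans_eq ?_
        rw [norm_smul, norm_smul, Real.norm_two, Real.norm_eq_abs]
    _ ≤ 2 * (gradSq ψ x * ‖x‖) + (gradSq ψ x + |q x| * ‖ψ x‖ ^ 2) * ‖x‖ := by gcongr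
    _ = ‖x‖ * (3 * gradSq ψ x + |q x| * ‖ψ x‖ ^ 2) := by ring

lemma norm_flux_self_le (ψ : E → F) (x : E) : ‖flux ψ ψ x‖ ≤ gradSq ψ x + ‖ψ x‖ ^ 2 := by
  refine (le_abs_self _).trans (abs_le_add_of_sq_le_four_mul (gradSq_nonneg ψ x) (sq_nonneg _) ?_)
  linarith [norm_flux_sq_le ψ ψ x, mul_nonneg (gradSq_nonneg ψ x) (sq_nonneg ‖ψ x‖)]

lemma divergence_virialField (hq : ContDiff ℝ 1 q) (hψ : ContDiff ℝ 2 ψ)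
    (heq : Δ ψ x = q x • ψ x) :
    divergence (virialField q ψ) x = 2 * gradSq ψ x -
      Module.finrank ℝ E * (gradSq ψ x + q x * ‖ψ x‖ ^ 2) - radialDeriv q x * ‖ψ x‖ ^ 2 := by
  have hflux := (contDiff_flux hψ (contDiff_radialDeriv hψ)).differentiable one_ne_zero x
  have henergy : HasFDerivAt (fun y ↦ gradSq ψ y + q y * ‖ψ y‖ ^ 2) _ x :=
    ((contDiff_gradSq hψ).differentiable one_ne_zero x).hasFDerivAt.fun_add
      ((hq.differentiable one_ne_zero x).hasFDerivAt.fun_mul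
        (hψ.differentiable two_ne_zero x).hasFDerivAt.norm_sq)
  have hsplit : divergence (virialField q ψ) x = 2 * divergence (flux ψ (radialDeriv ψ)) x -
      divergence (fun y ↦ (gradSq ψ y + q y * ‖ψ y‖ ^ 2) • y) x := by
    rw [← divergence_const_smul 2 hflux]
    exact divergence_sub (hflux.const_smul (2 : ℝ))
      (henergy.differentiableAt.smul differentiableAt_id)
  rw [hsplit, divergence_flux_radialDeriv hψ, divergence_smul_id henergy.differentiableAt,
    henergy.fderiv, heq, real_inner_smul_left]
  simp only [radialDeriv, add_apply, smul_apply, ContinuousLinearMap.comp_apply,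
    coe_innerSL_apply, nsmul_eq_mul, Nat.cast_ofNat, smul_eq_mul]
  ring

end Virial

section Weight

/-- A nonnegative, nondecreasing weight on `(0, ∞)` which behaves like a symbol: each derivative
up to the second gains a factor `r⁻¹`, with constant `κ`. -/
structure IsSymbolicWeight (w : ℝ → ℝ) (κ : ℝ) : Prop where
  contDiffOn : ContDiffOn ℝ 2 w (Set.Ioi 0)
  nonneg : ∀ r > 0, 0 ≤ w r
  deriv_nonneg : ∀ r > 0, 0 ≤ deriv w r
  mul_deriv_le : ∀ r > 0, r * deriv w r ≤ κ * w r
  sq_mul_abs_deriv_deriv_le : ∀ r > 0, r ^ 2 * |deriv (deriv w) r| ≤ κ * w r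

/-- The coefficient of the flux `⟨∇ψ, ψ⟩` which makes the energy density `|∇ψ|² + q|ψ|²` enter
the divergence of `commutantField` in dimension `d` with coefficient `-w / 2`. -/
noncomputable def energyMultiplier (d : ℕ) (w : ℝ → ℝ) (r : ℝ) : ℝ :=
  (d - 1 / 2) * w r + 2 * (r - 1) * deriv w r

namespace IsSymbolicWeight

variable {w : ℝ → ℝ} {κ r : ℝ}

lemma differentiableAt (hw : IsSymbolicWeight w κ) (hr : 0 < r) : DifferentiableAt ℝ w r :=
  (hw.contDiffOn.contDiffAt (Ioi_mem_nhds hr)).differentiableAt two_ne_zero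

lemma contDiffOn_deriv (hw : IsSymbolicWeight w κ) : ContDiffOn ℝ 1 (deriv w) (Set.Ioi 0) :=
  hw.contDiffOn.deriv_of_isOpen isOpen_Ioi one_add_one_eq_two.le

lemma contDiffOn_energyMultiplier (hw : IsSymbolicWeight w κ) (d : ℕ) :
    ContDiffOn ℝ 1 (energyMultiplier d w) (Set.Ioi 0) :=
  (contDiffOn_const.mul (hw.contDiffOn.of_le one_le_two)).add
    ((contDiffOn_const.mul (contDiffOn_id.sub contDiffOn_const)).mul hw.contDiffOn_deriv)

lemma hasDerivAt_energyMultiplier (hw : IsSymbolicWeight w κ) (d : ℕ) (hr : 0 < r) :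
    HasDerivAt (energyMultiplier d w)
      ((d + 3 / 2) * deriv w r + 2 * (r - 1) * deriv (deriv w) r) r := by
  have hw₁ := (hw.differentiableAt hr).hasDerivAt
  have hw₂ := ((hw.contDiffOn_deriv.contDiffAt (Ioi_mem_nhds hr)).differentiableAt
    one_ne_zero).hasDerivAt
  exact ((hw₁.const_mul (d - 1 / 2 : ℝ)).add
    ((((hasDerivAt_id' r).sub_const 1).const_mul 2).mul hw₂)).congr_deriv (by ring)

lemma mul_abs_deriv_energyMultiplier_le (hw : IsSymbolicWeight w κ) (d : ℕ) (hr : 1 ≤ r) :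
    r * |deriv (energyMultiplier d w) r| ≤ (d + 7 / 2) * κ * w r := by
  have hr₀ : 0 < r := by linarith
  have hw₁ := hw.deriv_nonneg r hr₀
  have htriangle : |(d + 3 / 2) * deriv w r + 2 * (r - 1) * deriv (deriv w) r| ≤
      (d + 3 / 2) * deriv w r + 2 * r * |deriv (deriv w) r| := by
    refine (abs_add_le _ _).trans (add_le_add (abs_of_nonneg (by positivity)).le ?_)
    rw [abs_mul, abs_of_nonneg (by linarith)]
    gcongr
    linarith
  calc r * |deriv (energyMultiplier d w) r|
      ≤ r * ((d + 3 / 2) * deriv w r + 2 * r * |deriv (deriv w) r|) := by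
        rw [(hw.hasDerivAt_energyMultiplier d hr₀).deriv]
        gcongr
    _ = (d + 3 / 2) * (r * deriv w r) + 2 * (r ^ 2 * |deriv (deriv w) r|) := by ring
    _ ≤ (d + 3 / 2) * (κ * w r) + 2 * (κ * w r) := by
        gcongr (d + 3 / 2) * ?_ + 2 * ?_
        exacts [hw.mul_deriv_le r hr₀, hw.sq_mul_abs_deriv_deriv_le r hr₀]
    _ = (d + 7 / 2) * κ * w r := by ring

lemma abs_energyMultiplier_le (hw : IsSymbolicWeight w κ) (d : ℕ) (hr : 1 ≤ r) :
    |energyMultiplier d w r| ≤ (d + 1 / 2 + 2 * κ) * w r := by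
  have hr₀ : 0 < r := by linarith
  have hw₀ := hw.nonneg r hr₀
  have hw₁ := hw.deriv_nonneg r hr₀
  have hd : |(d - 1 / 2 : ℝ)| ≤ d + 1 / 2 := by
    rw [abs_le]; constructor <;> linarith [d.cast_nonneg (α := ℝ)]
  calc |energyMultiplier d w r|
      ≤ |(d - 1 / 2 : ℝ)| * w r + 2 * (r - 1) * deriv w r := by
        refine (abs_add_le _ _).trans_eq ?_
        rw [abs_mul, abs_of_nonneg hw₀,
          abs_of_nonneg (mul_nonneg (by linarith) hw₁ : 0 ≤ 2 * (r - 1) * deriv w r)]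
    _ ≤ (d + 1 / 2) * w r + 2 * (r * deriv w r) := by
        rw [mul_assoc 2]
        gcongr
        linarith
    _ ≤ (d + 1 / 2) * w r + 2 * (κ * w r) := by
        gcongr _ + 2 * ?_
        exact hw.mul_deriv_le r hr₀
    _ = (d + 1 / 2 + 2 * κ) * w r := by ring

end IsSymbolicWeight

/-- The power `r ^ k`, made bounded at infinity by the regularization parameter `t`. In the
notation of the paper, with `x = 1 / r`, this is `x⁻ᵏ (1 + t / x)⁻ᵏ`. -/
noncomputable def regularizedPow (k : ℕ) (t r : ℝ) : ℝ :=
  (r / (1 + t * r)) ^ k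

section RegularizedPow

variable {t r : ℝ} (k : ℕ)

lemma regularizedPow_nonneg (ht : 0 ≤ t) (hr : 0 ≤ r) : 0 ≤ regularizedPow k t r := by
  unfold regularizedPow; positivity

lemma regularizedPow_le_pow (ht : 0 ≤ t) (hr : 0 ≤ r) : regularizedPow k t r ≤ r ^ k := by
  unfold regularizedPow
  gcongr
  exact div_le_self hr (le_add_of_nonneg_right (by positivity))

lemma regularizedPow_le_inv_pow (ht : 0 < t) (hr : 0 ≤ r) : regularizedPow k t r ≤ t⁻¹ ^ k := by
  unfold regularizedPow
  gcongr
  rw [div_le_iff₀ (by positivity)]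
  field_simp
  linarith

lemma tendsto_regularizedPow (r : ℝ) :
    Tendsto (fun t ↦ regularizedPow k t r) (𝓝 0) (𝓝 (r ^ k)) := by
  have hden : ContinuousAt (fun t ↦ regularizedPow k t r) 0 := by
    unfold regularizedPow
    fun_prop (disch := simp)
  simpa [regularizedPow] using hden.tendsto

lemma hasDerivAt_regularizedPow (ht : 0 ≤ t) (hr : 0 < r) :
    HasDerivAt (regularizedPow k t) (k * regularizedPow k t r / (r * (1 + t * r))) r := by
  have hden : 1 + t * r ≠ 0 := by positivity
  have hbase : HasDerivAt (fun r ↦ r / (1 + t * r)) (1 / (1 + t * r) ^ 2) r := by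
    refine ((hasDerivAt_id' r).div (((hasDerivAt_id' r).const_mul t).const_add 1)
      hden).congr_deriv ?_
    ring
  refine (hbase.pow k).congr_deriv ?_
  rcases k with _ | k
  · simp
  · simp only [regularizedPow, add_tsub_cancel_right, pow_succ]
    field_simp

lemma hasDerivAt_deriv_regularizedPow (ht : 0 ≤ t) (hr : 0 < r) :
    HasDerivAt (deriv (regularizedPow k t))
      (k * regularizedPow k t r * (k - 1 - 2 * t * r) / (r * (1 + t * r)) ^ 2) r := by
  have hden : r * (1 + t * r) ≠ 0 := by positivity
  have hderiv : deriv (regularizedPow k t) =ᶠ[𝓝 r]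
      fun r ↦ k * regularizedPow k t r / (r * (1 + t * r)) := by
    filter_upwards [Ioi_mem_nhds hr] with s hs using (hasDerivAt_regularizedPow k ht hs).deriv
  refine HasDerivAt.congr_of_eventuallyEq ?_ hderiv
  refine (((hasDerivAt_regularizedPow k ht hr).const_mul (k : ℝ)).div
    ((hasDerivAt_id' r).mul (((hasDerivAt_id' r).const_mul t).const_add 1)) hden).congr_deriv ?_
  simp only [Pi.mul_apply]
  field_simp
  ring

lemma isSymbolicWeight_regularizedPow (ht : 0 ≤ t) :
    IsSymbolicWeight (regularizedPow k t) (k * (k + 2)) where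
  contDiffOn := by
    refine (contDiffOn_fun_id.div (contDiffOn_const.add (contDiffOn_const.mul contDiffOn_fun_id))
      fun r (hr : 0 < r) ↦ ?_).pow k
    positivity
  nonneg r hr := regularizedPow_nonneg k ht hr.le
  deriv_nonneg r hr := by
    have := regularizedPow_nonneg k ht hr.le
    rw [(hasDerivAt_regularizedPow k ht hr).deriv]
    positivity
  mul_deriv_le r hr := by
    have := regularizedPow_nonneg k ht hr.le
    rw [(hasDerivAt_regularizedPow k ht hr).deriv]
    calc r * (k * regularizedPow k t r / (r * (1 + t * r)))
        = k * regularizedPow k t r / (1 + t * r) := by field_simp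
      _ ≤ k * regularizedPow k t r :=
        div_le_self (by positivity) (le_add_of_nonneg_right (by positivity))
      _ ≤ k * (k + 2) * regularizedPow k t r := by
        gcongr
        exact le_mul_of_one_le_right (by positivity) (by linarith [k.cast_nonneg (α := ℝ)])
  sq_mul_abs_deriv_deriv_le r hr := by
    have := regularizedPow_nonneg k ht hr.le
    have hk : |(k : ℝ) - 1 - 2 * t * r| ≤ (k + 2) * (1 + t * r) ^ 2 := by
      have : 0 ≤ t * r := by positivity
      have : (0 : ℝ) ≤ k := k.cast_nonneg
      have : (1 : ℝ) ≤ (1 + t * r) ^ 2 := one_le_pow₀ (by linarith)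
      rw [abs_le]; constructor <;> nlinarith
    rw [(hasDerivAt_deriv_regularizedPow k ht hr).deriv, abs_div, abs_mul,
      abs_of_nonneg (by positivity : 0 ≤ k * regularizedPow k t r),
      abs_of_nonneg (by positivity : 0 ≤ (r * (1 + t * r)) ^ 2)]
    calc r ^ 2 * (k * regularizedPow k t r * |(k : ℝ) - 1 - 2 * t * r| / (r * (1 + t * r)) ^ 2)
        = k * regularizedPow k t r * (|(k : ℝ) - 1 - 2 * t * r| / (1 + t * r) ^ 2) := by field_simp
      _ ≤ k * regularizedPow k t r * (k + 2) := by
        gcongr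
        rwa [div_le_iff₀ (by positivity)]
      _ = k * (k + 2) * regularizedPow k t r := by ring

end RegularizedPow

end Weight

section Commutant

variable {E F : Type*} [NormedAddCommGroup E] [InnerProductSpace ℝ E]

lemma hasFDerivAt_comp_one_add_norm_sq {w : ℝ → ℝ} {x : E}
    (hw : DifferentiableAt ℝ w (1 + ‖x‖ ^ 2)) :
    HasFDerivAt (fun y ↦ w (1 + ‖y‖ ^ 2)) (deriv w (1 + ‖x‖ ^ 2) • 2 • innerSL ℝ x) x :=
  hw.hasDerivAt.comp_hasFDerivAt x ((hasStrictFDerivAt_norm_sq x).hasFDerivAt.const_add 1)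

lemma contDiff_comp_one_add_norm_sq {w : ℝ → ℝ} {n : WithTop ℕ∞}
    (hw : ContDiffOn ℝ n w (Set.Ioi 0)) : ContDiff ℝ n fun x : E ↦ w (1 + ‖x‖ ^ 2) :=
  hw.comp_contDiff (contDiff_const.add (contDiff_norm_sq ℝ)) fun x ↦ by
    rw [Set.mem_Ioi]; positivity

variable [FiniteDimensional ℝ E] [NormedAddCommGroup F] [InnerProductSpace ℝ F]
  {w : ℝ → ℝ} {κ : ℝ} {q : E → ℝ} {ψ : E → F} {x : E}

lemma divergence_comp_one_add_norm_sq_smul {Y : E → E}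
    (hw : DifferentiableAt ℝ w (1 + ‖x‖ ^ 2)) (hY : DifferentiableAt ℝ Y x) :
    divergence (fun y ↦ w (1 + ‖y‖ ^ 2) • Y y) x =
      w (1 + ‖x‖ ^ 2) * divergence Y x + 2 * deriv w (1 + ‖x‖ ^ 2) * ⟪x, Y x⟫_ℝ := by
  have hrad := hasFDerivAt_comp_one_add_norm_sq hw
  rw [divergence_smul hrad.differentiableAt hY, hrad.fderiv]
  simp only [smul_apply, coe_innerSL_apply, nsmul_eq_mul, Nat.cast_ofNat, smul_eq_mul]
  ring

/-- The field whose divergence is the quadratic form of the commutator of `-Δ + q` with the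
dilation generator weighted by `w (1 + ‖x‖ ^ 2)`. -/
noncomputable def commutantField (w : ℝ → ℝ) (q : E → ℝ) (ψ : E → F) (x : E) : E :=
  w (1 + ‖x‖ ^ 2) • virialField q ψ x +
    energyMultiplier (Module.finrank ℝ E) w (1 + ‖x‖ ^ 2) • flux ψ ψ x

lemma contDiff_commutantField (hw : IsSymbolicWeight w κ) (hq : ContDiff ℝ 1 q)
    (hψ : ContDiff ℝ 2 ψ) : ContDiff ℝ 1 (commutantField w q ψ) :=
  ((contDiff_comp_one_add_norm_sq (hw.contDiffOn.of_le one_le_two)).smul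
    (contDiff_virialField hq hψ)).add
    ((contDiff_comp_one_add_norm_sq (hw.contDiffOn_energyMultiplier _)).smul
      (contDiff_flux hψ (hψ.of_le one_le_two)))

lemma norm_commutantField_le (hw : IsSymbolicWeight w κ) (q : E → ℝ) (ψ : E → F) (x : E) :
    ‖commutantField w q ψ x‖ ≤ (1 + ‖x‖) * (w (1 + ‖x‖ ^ 2) *
      (3 * gradSq ψ x + |q x| * ‖ψ x‖ ^ 2 +
        (Module.finrank ℝ E + 1 / 2 + 2 * κ) * (gradSq ψ x + ‖ψ x‖ ^ 2))) := by
  have hρ : 1 ≤ 1 + ‖x‖ ^ 2 := le_add_of_nonneg_right (sq_nonneg _)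
  have hw₀ := hw.nonneg (1 + ‖x‖ ^ 2) (by positivity)
  have hgrad := gradSq_nonneg ψ x
  have henergy := hw.abs_energyMultiplier_le (Module.finrank ℝ E) hρ
  set M : ℝ := Module.finrank ℝ E + 1 / 2 + 2 * κ
  calc ‖commutantField w q ψ x‖
      ≤ w (1 + ‖x‖ ^ 2) * ‖virialField q ψ x‖ +
          |energyMultiplier (Module.finrank ℝ E) w (1 + ‖x‖ ^ 2)| * ‖flux ψ ψ x‖ := by
        refine (norm_add_le _ _).trans_eq ?_
        rw [norm_smul, norm_smul, Real.norm_of_nonneg hw₀, Real.norm_eq_abs]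
    _ ≤ w (1 + ‖x‖ ^ 2) * (‖x‖ * (3 * gradSq ψ x + |q x| * ‖ψ x‖ ^ 2)) +
          M * w (1 + ‖x‖ ^ 2) * (gradSq ψ x + ‖ψ x‖ ^ 2) := by
        gcongr
        · exact norm_virialField_le q ψ x
        · exact (abs_nonneg _).trans henergy
        · exact norm_flux_self_le ψ x
    _ ≤ _ := by
        have hM : 0 ≤ M * w (1 + ‖x‖ ^ 2) := (abs_nonneg _).trans henergy
        have hrest : 0 ≤ w (1 + ‖x‖ ^ 2) * (3 * gradSq ψ x + |q x| * ‖ψ x‖ ^ 2) +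
            ‖x‖ * (M * w (1 + ‖x‖ ^ 2) * (gradSq ψ x + ‖ψ x‖ ^ 2)) := by positivity
        linarith

lemma divergence_commutantField (hw : IsSymbolicWeight w κ) (hq : ContDiff ℝ 1 q)
    (hψ : ContDiff ℝ 2 ψ) (heq : Δ ψ x = q x • ψ x) :
    divergence (commutantField w q ψ) x =
      3 / 2 * w (1 + ‖x‖ ^ 2) * gradSq ψ x +
      4 * deriv w (1 + ‖x‖ ^ 2) * ‖radialDeriv ψ x‖ ^ 2 -
      w (1 + ‖x‖ ^ 2) * (radialDeriv q x + q x / 2) * ‖ψ x‖ ^ 2 +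
      2 * deriv (energyMultiplier (Module.finrank ℝ E) w) (1 + ‖x‖ ^ 2) *
        ⟪radialDeriv ψ x, ψ x⟫_ℝ := by
  have hρ : 0 < 1 + ‖x‖ ^ 2 := by positivity
  have hw' := hw.differentiableAt hρ
  have hm' := (hw.hasDerivAt_energyMultiplier (Module.finrank ℝ E) hρ).differentiableAt
  have hvirial := (contDiff_virialField hq hψ).differentiable one_ne_zero x
  have hflux := (contDiff_flux hψ (hψ.of_le one_le_two)).differentiable one_ne_zero x
  have hsplit : divergence (commutantField w q ψ) x = _ := divergence_add
    ((hasFDerivAt_comp_one_add_norm_sq hw').differentiableAt.smul hvirial)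
    ((hasFDerivAt_comp_one_add_norm_sq hm').differentiableAt.smul hflux)
  rw [hsplit, divergence_comp_one_add_norm_sq_smul hw' hvirial,
    divergence_comp_one_add_norm_sq_smul hm' hflux, divergence_virialField hq hψ heq,
    divergence_flux_self hψ, inner_virialField, inner_flux, ← radialDeriv, heq,
    real_inner_smul_left, real_inner_self_eq_norm_sq, energyMultiplier]
  ring

lemma abs_two_mul_deriv_energyMultiplier_mul_inner_le (hw : IsSymbolicWeight w κ) (d : ℕ)
    (ψ : E → F) (x : E) :
    |2 * deriv (energyMultiplier d w) (1 + ‖x‖ ^ 2) * ⟪radialDeriv ψ x, ψ x⟫_ℝ| ≤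
      w (1 + ‖x‖ ^ 2) * gradSq ψ x +
        w (1 + ‖x‖ ^ 2) * ((d + 7 / 2) * κ) ^ 2 / (1 + ‖x‖ ^ 2) * ‖ψ x‖ ^ 2 := by
  set ρ := 1 + ‖x‖ ^ 2
  set A := (d + 7 / 2) * κ
  set m' := deriv (energyMultiplier d w) ρ
  have hρ : 1 ≤ ρ := le_add_of_nonneg_right (sq_nonneg _)
  have hw₀ := hw.nonneg ρ (by positivity)
  have hgrad := gradSq_nonneg ψ x
  have hm' : |m'| ≤ A * w ρ / ρ := by
    rw [le_div_iff₀' (by positivity)]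
    exact hw.mul_abs_deriv_energyMultiplier_le d hρ
  have hinner : |⟪radialDeriv ψ x, ψ x⟫_ℝ| ^ 2 ≤ gradSq ψ x * ρ * ‖ψ x‖ ^ 2 := calc
    |⟪radialDeriv ψ x, ψ x⟫_ℝ| ^ 2 ≤ (‖radialDeriv ψ x‖ * ‖ψ x‖) ^ 2 := by
      gcongr
      exact abs_real_inner_le_norm _ _
    _ ≤ gradSq ψ x * ρ * ‖ψ x‖ ^ 2 := by
      rw [mul_pow]
      gcongr
      exact (norm_radialDeriv_sq_le ψ x).trans (by gcongr; exact le_add_of_nonneg_left zero_le_one)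
  refine abs_le_add_of_sq_le_four_mul (by positivity) (by positivity) ?_
  calc (2 * m' * ⟪radialDeriv ψ x, ψ x⟫_ℝ) ^ 2
      = 4 * (|m'| ^ 2 * |⟪radialDeriv ψ x, ψ x⟫_ℝ| ^ 2) := by simp only [sq_abs]; ring
    _ ≤ 4 * ((A * w ρ / ρ) ^ 2 * (gradSq ψ x * ρ * ‖ψ x‖ ^ 2)) := by gcongr
    _ = 4 * (w ρ * gradSq ψ x) * (w ρ * A ^ 2 / ρ * ‖ψ x‖ ^ 2) := by field_simp

theorem mul_norm_sq_le_divergence_commutantField (hw : IsSymbolicWeight w κ)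
    (hq : ContDiff ℝ 1 q) (hψ : ContDiff ℝ 2 ψ) (heq : Δ ψ x = q x • ψ x) :
    w (1 + ‖x‖ ^ 2) * (-q x / 2 - radialDeriv q x -
        ((Module.finrank ℝ E + 7 / 2) * κ) ^ 2 / (1 + ‖x‖ ^ 2)) * ‖ψ x‖ ^ 2 ≤
      divergence (commutantField w q ψ) x := by
  have hcross := neg_le_of_abs_le
    (abs_two_mul_deriv_energyMultiplier_mul_inner_le hw (Module.finrank ℝ E) ψ x)
  have hgrad_term : 0 ≤ w (1 + ‖x‖ ^ 2) * gradSq ψ x :=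
    mul_nonneg (hw.nonneg _ (by positivity)) (gradSq_nonneg ψ x)
  have hradial_term : 0 ≤ deriv w (1 + ‖x‖ ^ 2) * ‖radialDeriv ψ x‖ ^ 2 :=
    mul_nonneg (hw.deriv_nonneg _ (by positivity)) (sq_nonneg _)
  rw [divergence_commutantField hw hq hψ heq]
  ring_nf at hcross hgrad_term hradial_term ⊢
  linarith

end Commutant

lemma lap_eq_laplacian {n : ℕ} {ψ : EuclideanSpace ℝ (Fin n) → ℂ} (hψ : ContDiff ℝ 2 ψ) :
    lap ψ = Δ ψ := by
  ext x
  simp only [lap, (hasFDerivAt_fderiv_apply hψ x _).fderiv, iteratedFDeriv_two_apply,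
    InnerProductSpace.laplacian_eq_iteratedFDeriv_orthonormalBasis ψ
      (EuclideanSpace.basisFun (Fin n) ℝ), EuclideanSpace.basisFun_apply,
    ContinuousLinearMap.flip_apply, Matrix.cons_val_zero, Matrix.cons_val_one]

section SymbolicDecay

variable {E F : Type*} [NormedAddCommGroup E] [ProperSpace E] [NormedAddCommGroup F] {δ C : ℝ}

lemma tendsto_zero_of_norm_le_one_add_norm_rpow {f : E → F} (hδ : 0 < δ)
    (hf : ∀ x, ‖f x‖ ≤ C * (1 + ‖x‖) ^ (-δ)) : Tendsto f (cocompact E) (𝓝 0) := by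
  have hpow : Tendsto (fun x : E ↦ (1 + ‖x‖) ^ (-δ)) (cocompact E) (𝓝 0) :=
    (tendsto_rpow_neg_atTop hδ).comp <|
      tendsto_atTop_add_const_left _ 1 tendsto_norm_cocompact_atTop
  exact squeeze_zero_norm hf (by simpa using hpow.const_mul C)

lemma tendsto_radialDeriv_of_norm_fderiv_le [NormedSpace ℝ E] [NormedSpace ℝ F] {f : E → F}
    (hδ : 0 < δ) (hf : ∀ x, ‖fderiv ℝ f x‖ ≤ C * (1 + ‖x‖) ^ (-(δ + 1))) :
    Tendsto (radialDeriv f) (cocompact E) (𝓝 0) := by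
  refine tendsto_zero_of_norm_le_one_add_norm_rpow (C := C) hδ fun x ↦ ?_
  have hx : 0 < 1 + ‖x‖ := by positivity
  calc ‖radialDeriv f x‖ ≤ ‖fderiv ℝ f x‖ * ‖x‖ := (fderiv ℝ f x).le_opNorm x
    _ ≤ ‖fderiv ℝ f x‖ * (1 + ‖x‖) := by
        gcongr
        exact le_add_of_nonneg_left zero_le_one
    _ ≤ C * (1 + ‖x‖) ^ (-(δ + 1)) * (1 + ‖x‖) := by
        gcongr
        exact hf x
    _ = C * (1 + ‖x‖) ^ (-δ) := by
        rw [mul_assoc, ← Real.rpow_add_one hx.ne', neg_add, neg_add_cancel_right]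

end SymbolicDecay

section Decay

lemma exists_forall_le_of_eventually_cocompact_le {X : Type*} [TopologicalSpace X] {f : X → ℝ}
    {a : ℝ} (hf : Continuous f) (hfa : ∀ᶠ x in cocompact X, f x ≤ a) :
    ∃ K ≥ a, ∀ x, f x ≤ K := by
  obtain ⟨s, hs, hsf⟩ := mem_cocompact.1 hfa
  obtain ⟨K, hK⟩ := hs.bddAbove_image hf.continuousOn
  refine ⟨max a K, le_max_left _ _, fun x ↦ ?_⟩
  by_cases hx : x ∈ s
  · exact (hK ⟨x, hx, rfl⟩).trans (le_max_right _ _)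
  · exact (hsf hx).trans (le_max_left _ _)

lemma tendsto_inv_one_add_norm_sq_cocompact (E : Type*) [NormedAddCommGroup E] [ProperSpace E] :
    Tendsto (fun x : E ↦ (1 + ‖x‖ ^ 2)⁻¹) (cocompact E) (𝓝 0) :=
  tendsto_inv_atTop_zero.comp <| tendsto_atTop_add_const_left _ 1 <|
    (tendsto_pow_atTop two_ne_zero).comp tendsto_norm_cocompact_atTop

lemma one_add_norm_rpow_two_mul_le {E : Type*} [SeminormedAddGroup E] {β : ℝ} {k : ℕ}
    (hβ : β ≤ k) (x : E) : (1 + ‖x‖) ^ (2 * β) ≤ 2 ^ k * (1 + ‖x‖ ^ 2) ^ k :=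
  calc (1 + ‖x‖) ^ (2 * β)
      ≤ (1 + ‖x‖) ^ (2 * k : ℝ) := by
        gcongr
        exact le_add_of_nonneg_right (norm_nonneg x)
    _ = ((1 + ‖x‖) ^ 2) ^ k := by
        rw [← pow_mul]
        exact_mod_cast Real.rpow_natCast _ (2 * k)
    _ ≤ (2 * (1 ^ 2 + ‖x‖ ^ 2)) ^ k := by
        gcongr
        exact add_sq_le
    _ = 2 ^ k * (1 + ‖x‖ ^ 2) ^ k := by rw [one_pow, mul_pow]

variable {E F : Type*} [NormedAddCommGroup E] [InnerProductSpace ℝ E] [FiniteDimensional ℝ E]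
  [NormedAddCommGroup F] [InnerProductSpace ℝ F] {q : E → ℝ} {ψ : E → F} {lam : ℝ}

lemma exists_forall_sub_le_divergence_commutantField (hq : ContDiff ℝ 1 q) (hlam : 0 < lam)
    (hq_lim : Tendsto q (cocompact E) (𝓝 (-lam)))
    (hq_rad : Tendsto (radialDeriv q) (cocompact E) (𝓝 0)) (hψ : ContDiff ℝ 2 ψ)
    (heq : ∀ x, Δ ψ x = q x • ψ x) (k : ℕ) (κ : ℝ) :
    ∃ K, ∀ w, IsSymbolicWeight w κ → (∀ r > 0, w r ≤ r ^ k) → ∀ x,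
      lam / 4 * (w (1 + ‖x‖ ^ 2) * ‖ψ x‖ ^ 2) - K * ‖ψ x‖ ^ 2 ≤
        divergence (commutantField w q ψ) x := by
  set c : E → ℝ := fun x ↦
    -q x / 2 - radialDeriv q x - ((Module.finrank ℝ E + 7 / 2) * κ) ^ 2 / (1 + ‖x‖ ^ 2)
  have hc : Continuous c := by
    have hrad : Continuous (radialDeriv q) :=
      (hq.continuous_fderiv one_ne_zero).clm_apply continuous_id
    exact ((hq.continuous.neg.div_const 2).sub hrad).sub
      (continuous_const.div (by fun_prop) fun x ↦ by positivity)
  have hc_lim : Tendsto c (cocompact E) (𝓝 (lam / 2)) := by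
    simpa [c, div_eq_mul_inv] using ((hq_lim.neg.div_const 2).sub hq_rad).sub
      ((tendsto_inv_one_add_norm_sq_cocompact E).const_mul
        (((Module.finrank ℝ E + 7 / 2) * κ) ^ 2))
  have hc_large : ∀ᶠ x in cocompact E, (1 + ‖x‖ ^ 2) ^ k * (lam / 4 - c x) ≤ 0 := by
    filter_upwards [hc_lim.eventually_const_lt (by linarith : lam / 4 < lam / 2)] with x hx
    exact mul_nonpos_of_nonneg_of_nonpos (by positivity) (by linarith)
  obtain ⟨K, hK₀, hK⟩ := exists_forall_le_of_eventually_cocompact_le (by fun_prop) hc_large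
  refine ⟨K, fun w hw hwk x ↦ ?_⟩
  have hρ : 0 < 1 + ‖x‖ ^ 2 := by positivity
  have hdefect : w (1 + ‖x‖ ^ 2) * (lam / 4 - c x) ≤ K := by
    rcases le_total (lam / 4 - c x) 0 with hcx | hcx
    · exact (mul_nonpos_of_nonneg_of_nonpos (hw.nonneg _ hρ) hcx).trans hK₀
    · exact (mul_le_mul_of_nonneg_right (hwk _ hρ) hcx).trans (hK x)
  calc lam / 4 * (w (1 + ‖x‖ ^ 2) * ‖ψ x‖ ^ 2) - K * ‖ψ x‖ ^ 2
      ≤ lam / 4 * (w (1 + ‖x‖ ^ 2) * ‖ψ x‖ ^ 2) -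
          w (1 + ‖x‖ ^ 2) * (lam / 4 - c x) * ‖ψ x‖ ^ 2 := by gcongr
    _ = w (1 + ‖x‖ ^ 2) * c x * ‖ψ x‖ ^ 2 := by ring
    _ ≤ divergence (commutantField w q ψ) x :=
        mul_norm_sq_le_divergence_commutantField hw hq hψ (heq x)

variable [MeasurableSpace E] [BorelSpace E] {μ : Measure E} [μ.IsAddHaarMeasure]

lemma integrable_and_integral_weight_mul_le {w : ℝ → ℝ} {κ B Q c K : ℝ}
    (hw : IsSymbolicWeight w κ) (hwB : ∀ r > 0, w r ≤ B) (hq : ContDiff ℝ 1 q)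
    (hqQ : ∀ x, |q x| ≤ Q) (hψ : ContDiff ℝ 2 ψ) (hL2 : Integrable (fun x ↦ ‖ψ x‖ ^ 2) μ)
    (hgrad : Integrable (gradSq ψ) μ) (hc : 0 ≤ c)
    (hdiv : ∀ x, c * (w (1 + ‖x‖ ^ 2) * ‖ψ x‖ ^ 2) - K * ‖ψ x‖ ^ 2 ≤
      divergence (commutantField w q ψ) x) :
    Integrable (fun x ↦ c * (w (1 + ‖x‖ ^ 2) * ‖ψ x‖ ^ 2)) μ ∧
      ∫ x, c * (w (1 + ‖x‖ ^ 2) * ‖ψ x‖ ^ 2) ∂μ ≤ ∫ x, K * ‖ψ x‖ ^ 2 ∂μ := by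
  have hw_nonneg (x : E) : 0 ≤ w (1 + ‖x‖ ^ 2) := hw.nonneg _ (by positivity)
  have hcont : Continuous fun x ↦ c * (w (1 + ‖x‖ ^ 2) * ‖ψ x‖ ^ 2) :=
    ((contDiff_comp_one_add_norm_sq hw.contDiffOn).continuous.mul
      (hψ.continuous.norm.pow 2)).const_mul c
  set M : ℝ := Module.finrank ℝ E + 1 / 2 + 2 * κ
  have hbound : Integrable (fun x ↦ B * (3 * gradSq ψ x + Q * ‖ψ x‖ ^ 2 +
      |M| * (gradSq ψ x + ‖ψ x‖ ^ 2))) μ :=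
    (((hgrad.const_mul 3).add (hL2.const_mul Q)).add ((hgrad.add hL2).const_mul |M|)).const_mul B
  refine integrable_and_integral_le_of_sub_le_divergence (contDiff_commutantField hw hq hψ)
    hbound (fun x ↦ (norm_commutantField_le hw q ψ x).trans ?_) hcont.locallyIntegrable
    (fun x ↦ mul_nonneg hc (mul_nonneg (hw_nonneg x) (sq_nonneg _))) (hL2.const_mul K) hdiv
  have hgrad_nonneg := gradSq_nonneg ψ x
  have hQ : 0 ≤ Q := (abs_nonneg _).trans (hqQ x)
  gcongr (1 + ‖x‖) * ?_
  calc w (1 + ‖x‖ ^ 2) * (3 * gradSq ψ x + |q x| * ‖ψ x‖ ^ 2 + M * (gradSq ψ x + ‖ψ x‖ ^ 2))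
      ≤ w (1 + ‖x‖ ^ 2) * (3 * gradSq ψ x + Q * ‖ψ x‖ ^ 2 + |M| * (gradSq ψ x + ‖ψ x‖ ^ 2)) := by
        gcongr
        exacts [hw_nonneg x, hqQ x, le_abs_self M]
    _ ≤ B * (3 * gradSq ψ x + Q * ‖ψ x‖ ^ 2 + |M| * (gradSq ψ x + ‖ψ x‖ ^ 2)) := by
        gcongr
        exact hwB _ (by positivity)

theorem integrable_one_add_norm_sq_pow_mul (hq : ContDiff ℝ 1 q) (hlam : 0 < lam)
    (hq_lim : Tendsto q (cocompact E) (𝓝 (-lam)))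
    (hq_rad : Tendsto (radialDeriv q) (cocompact E) (𝓝 0)) (hψ : ContDiff ℝ 2 ψ)
    (hL2 : Integrable (fun x ↦ ‖ψ x‖ ^ 2) μ) (heq : ∀ x, Δ ψ x = q x • ψ x) (k : ℕ) :
    Integrable (fun x ↦ (1 + ‖x‖ ^ 2) ^ k * ‖ψ x‖ ^ 2) μ := by
  obtain ⟨Q, -, hQ⟩ := exists_forall_le_of_eventually_cocompact_le hq.continuous.abs
    (hq_lim.abs.eventually_le_const (lt_add_one _))
  have hgrad : Integrable (gradSq ψ) μ := by
    refine integrable_gradSq (K := Q) hψ (fun x ↦ ?_) hL2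
    rw [heq, real_inner_smul_left, real_inner_self_eq_norm_sq]
    exact mul_le_mul_of_nonneg_right (neg_le_of_abs_le (hQ x)) (sq_nonneg _)
  obtain ⟨K, hK⟩ := exists_forall_sub_le_divergence_commutantField hq hlam hq_lim hq_rad hψ heq k
    (k * (k + 2))
  have hreg (j : ℕ) := integrable_and_integral_weight_mul_le (μ := μ)
    (isSymbolicWeight_regularizedPow k (t := 1 / (j + 1)) (by positivity))
    (fun r hr ↦ regularizedPow_le_inv_pow k (by positivity) hr.le) hq hQ hψ hL2 hgrad
    (by positivity : 0 ≤ lam / 4) (hK _ (isSymbolicWeight_regularizedPow k (by positivity))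
      fun r hr ↦ regularizedPow_le_pow k (by positivity) hr.le)
  have hlim (x : E) : Tendsto (fun j : ℕ ↦ lam / 4 *
      (regularizedPow k (1 / (j + 1)) (1 + ‖x‖ ^ 2) * ‖ψ x‖ ^ 2)) atTop
      (𝓝 (lam / 4 * ((1 + ‖x‖ ^ 2) ^ k * ‖ψ x‖ ^ 2))) :=
    (((tendsto_regularizedPow k _).comp tendsto_one_div_add_atTop_nhds_zero_nat).mul_const
      _).const_mul _
  have hint := (integrable_and_integral_le_of_tendsto (fun j ↦ (hreg j).1)
    (fun j ↦ .of_forall fun x ↦ mul_nonneg (by positivity) (mul_nonneg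
      (regularizedPow_nonneg k (by positivity) (by positivity)) (sq_nonneg _)))
    (.of_forall hlim) (fun j ↦ (hreg j).2) tendsto_const_nhds).1
  exact (integrable_const_mul_iff (by positivity : lam / 4 ≠ 0).isUnit _).1 hint

theorem stmt_11_general {V : E → ℝ} (hV : ContDiff ℝ 1 V)
    (hV_lim : Tendsto V (cocompact E) (𝓝 0))
    (hV_rad : Tendsto (radialDeriv V) (cocompact E) (𝓝 0)) (hlam : 0 < lam)
    (hψ : ContDiff ℝ 2 ψ) (hL2 : Integrable (fun x ↦ ‖ψ x‖ ^ 2) μ)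
    (heq : ∀ x, -Δ ψ x + V x • ψ x = lam • ψ x) (β : ℝ) :
    Integrable (fun x ↦ (1 + ‖x‖) ^ (2 * β) * ‖ψ x‖ ^ 2) μ := by
  obtain ⟨k, hk⟩ := exists_nat_ge β
  have hq_lim : Tendsto (fun x ↦ V x - lam) (cocompact E) (𝓝 (-lam)) := by
    simpa using hV_lim.sub_const lam
  have hq_rad : radialDeriv (fun x ↦ V x - lam) = radialDeriv V := by
    ext x
    simp only [radialDeriv, fderiv_sub_const]
  have hΔ (x : E) : Δ ψ x = (V x - lam) • ψ x := by
    rw [sub_smul, ← heq x]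
    abel
  refine ((integrable_one_add_norm_sq_pow_mul (hV.sub contDiff_const) hlam hq_lim
    (hq_rad ▸ hV_rad) hψ hL2 hΔ k).const_mul (2 ^ k)).mono' ?_ (.of_forall fun x ↦ ?_)
  · have hpow : Continuous fun x : E ↦ (1 + ‖x‖) ^ (2 * β) :=
      (by fun_prop : Continuous fun x : E ↦ 1 + ‖x‖).rpow_const fun x ↦ .inl (by positivity)
    exact (hpow.mul (hψ.continuous.norm.pow 2)).aestronglyMeasurable
  · rw [Real.norm_of_nonneg (by positivity), ← mul_assoc]
    gcongr
    exact one_add_norm_rpow_two_mul_le hk x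

end Decay

/-- Euclidean instance of Proposition 5.9: superpolynomial decay of positive-energy
`L²` eigenfunctions of `-Δ + V`, `V` of symbolic decay order `-δ`. -/
theorem stmt_11 (n : ℕ) (hn : 1 ≤ n) (δ : ℝ) (hδ : 0 < δ)
    (V : EuclideanSpace ℝ (Fin n) → ℝ) (hV : ContDiff ℝ (⊤ : ℕ∞) V)
    (hdecay : ∀ k : ℕ, ∃ C : ℝ, ∀ x,
      ‖iteratedFDeriv ℝ k V x‖ ≤ C * (1 + ‖x‖) ^ (-(δ + (k:ℝ))))
    (lam : ℝ) (hlam : 0 < lam)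
    (ψ : EuclideanSpace ℝ (Fin n) → ℂ) (hψ : ContDiff ℝ (⊤ : ℕ∞) ψ)
    (hL2 : Integrable (fun x => ‖ψ x‖^2))
    (heq : ∀ x, -lap ψ x + (V x : ℂ) * ψ x = (lam : ℂ) * ψ x) :
    ∀ β : ℝ, Integrable (fun x => (1 + ‖x‖) ^ (2*β) * ‖ψ x‖^2) := by
  obtain ⟨C₀, hC₀⟩ := hdecay 0
  obtain ⟨C₁, hC₁⟩ := hdecay 1
  simp only [norm_iteratedFDeriv_zero, Nat.cast_zero, add_zero] at hC₀
  simp only [norm_iteratedFDeriv_one, Nat.cast_one] at hC₁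
  have hψ₂ : ContDiff ℝ 2 ψ := contDiff_infty.1 hψ 2
  refine stmt_11_general (contDiff_infty.1 hV 1)
    (tendsto_zero_of_norm_le_one_add_norm_rpow hδ hC₀)
    (tendsto_radialDeriv_of_norm_fderiv_le hδ hC₁) hlam hψ₂ hL2 fun x ↦ ?_
  rw [← lap_eq_laplacian hψ₂, Complex.real_smul, Complex.real_smul, heq x]
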